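/- Suppose X is complete, A is closed, I and φ are lower semicontinuous on A, φ is continuous at every point of Ω, and there exist c > I*, λ₀ > 0 and δ > 0 such that (i) I is Lipschitz continuous on an open set containing S_{λ₀}(c) ∩ Ω_δ, (ii) there exists a > 0 such that φ↓_A(x) ≤ −a for all x ∈ S_{λ₀}(c) ∩ (Ω_δ \ Ω), and (iii) Φ_{λ₀} is bounded below on A. Then there exists λ* ≥ 0 such that for every λ ≥ λ*: a point x* ∈ S_λ(c) is a local minimizer of Φ_λ on A if and only if x* is a local minimizer of I on Ω. -/

import Mathlib

/-!
Steep descent of `φ` at infeasible points gives an error bound near the feasible set: an Ekeland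
point `z` for `φ` below `y` admits no descent at rate `k`, so it must be feasible, and
`k * edist z y ≤ φ y`. If `I` is `L`-Lipschitz and `L ≤ λ * k`, moving from `y` to `z` raises `I` by
at most the penalty `λ * φ y` it removes, so a local minimizer of `I` on the feasible set minimizes
`Φ_λ` locally. Conversely, if `L < λ * k`, the descent of `λ * φ` at an infeasible point beats the
variation of `I`, so such a point is never a local minimizer of `Φ_λ`. The lower bound on `Φ_λ₀`
forces `φ < δ` on `S_λ(c)` for large `λ`, which brings both arguments into the region where they
apply.
-/

open Filter Metric Set Topology
open scoped ENNReal NNReal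

/-- The rate of steepest descent of `g : X → EReal` with respect to the set `K` at `x`. -/
noncomputable def rateOfDescent {X : Type*} [MetricSpace X] (g : X → EReal) (K : Set X)
    (x : X) : EReal :=
  Filter.liminf (fun y => (g y - g x) * (((dist y x)⁻¹ : ℝ) : EReal)) (nhdsWithin x (K \ {x}))

section Ekeland

variable {X : Type*} [PseudoEMetricSpace X] {f : X → ℝ≥0∞} {k : ℝ≥0} {z : X}

/-- The points below `z` in Ekeland's order `w ≼ z ↔ f w + k * edist w z ≤ f z`, whose minimal
elements the variational principle provides. -/
def ekelandSet (f : X → ℝ≥0∞) (k : ℝ≥0) (z : X) : Set X :=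
  {w | f w + k * edist w z ≤ f z}

lemma self_mem_ekelandSet : z ∈ ekelandSet f k z := by
  simp [ekelandSet]

lemma le_of_mem_ekelandSet {w : X} (hw : w ∈ ekelandSet f k z) : f w ≤ f z :=
  le_self_add.trans hw

lemma ekelandSet_subset {w : X} (hw : w ∈ ekelandSet f k z) :
    ekelandSet f k w ⊆ ekelandSet f k z := fun v hv =>
  calc f v + k * edist v z
      ≤ f v + k * (edist v w + edist w z) := by gcongr; exact edist_triangle v w z
    _ = f v + k * edist v w + k * edist w z := by ring
    _ ≤ f w + k * edist w z := by gcongr; exact hv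
    _ ≤ f z := hw

lemma isClosed_ekelandSet (hf : LowerSemicontinuous f) : IsClosed (ekelandSet f k z) := by
  have hdist : Continuous fun w => k * edist w z :=
    (ENNReal.continuous_const_mul ENNReal.coe_ne_top).comp (continuous_id.edist continuous_const)
  exact (hf.add hdist.lowerSemicontinuous).isClosed_preimage (f z)

lemma exists_mem_ekelandSet_forall_edist_le (hk : k ≠ 0) (hz : f z ≠ ⊤) {ε : ℝ≥0∞}
    (hε : ε ≠ 0) :
    ∃ w ∈ ekelandSet f k z, ∀ v ∈ ekelandSet f k w, edist v w ≤ ε := by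
  have hk' : (k : ℝ≥0∞) ≠ 0 := ENNReal.coe_ne_zero.2 hk
  have hinf : ⨅ v ∈ ekelandSet f k z, f v ≠ ⊤ :=
    ne_top_of_le_ne_top hz (iInf₂_le z self_mem_ekelandSet)
  obtain ⟨w, hw, hwε⟩ : ∃ w ∈ ekelandSet f k z, f w < (⨅ v ∈ ekelandSet f k z, f v) + k * ε := by
    simpa only [iInf_lt_iff, exists_prop] using
      ENNReal.lt_add_right hinf (mul_ne_zero hk' hε)
  refine ⟨w, hw, fun v hv => ?_⟩
  have hvz : v ∈ ekelandSet f k z := ekelandSet_subset hw hv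
  have hfv : f v ≠ ⊤ := ne_top_of_le_ne_top hz (le_of_mem_ekelandSet hvz)
  have hle : f v + k * edist v w ≤ f v + k * ε :=
    hv.trans (hwε.le.trans (by gcongr; exact iInf₂_le v hvz))
  exact (ENNReal.mul_le_mul_iff_right hk' ENNReal.coe_ne_top).1
    ((ENNReal.add_le_add_iff_left hfv).1 hle)

lemma exists_seq_antitone_ekelandSet (hk : k ≠ 0) (hz : f z ≠ ⊤) :
    ∃ u : ℕ → X, u 0 = z ∧ Antitone (fun n => ekelandSet f k (u n)) ∧
      ∀ n, ∀ v ∈ ekelandSet f k (u (n + 1)), edist v (u (n + 1)) ≤ 1 / 2 ^ n := by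
  have : Nonempty X := ⟨z⟩
  choose! next hnext hsmall using fun (n : ℕ) (w : X) (hw : f w ≠ ⊤) =>
    exists_mem_ekelandSet_forall_edist_le (ε := 1 / 2 ^ n) hk hw (by simp)
  let u : ℕ → X := Nat.rec z next
  have hu : ∀ n, f (u n) ≠ ⊤ := by
    intro n
    induction n with
    | zero => exact hz
    | succ n ih => exact ne_top_of_le_ne_top ih (le_of_mem_ekelandSet (hnext n _ ih))
  exact ⟨u, rfl, antitone_nat_of_succ_le fun n => ekelandSet_subset (hnext n _ (hu n)),
    fun n => hsmall n _ (hu n)⟩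

theorem exists_mem_ekelandSet_forall_edist_eq_zero [CompleteSpace X] (hf : LowerSemicontinuous f)
    (hk : k ≠ 0) (hz : f z ≠ ⊤) :
    ∃ w ∈ ekelandSet f k z, ∀ v ∈ ekelandSet f k w, edist v w = 0 := by
  obtain ⟨u, hu₀, hanti, hsmall⟩ := exists_seq_antitone_ekelandSet hk hz
  have hmem : ∀ {m n}, m ≤ n → u n ∈ ekelandSet f k (u m) := fun hmn =>
    hanti hmn self_mem_ekelandSet
  have hcauchy : CauchySeq fun n => u (n + 1) :=
    cauchySeq_of_edist_le_geometric_two 1 ENNReal.one_ne_top fun n => by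
      rw [edist_comm]
      exact hsmall n _ (hmem n.succ.le_succ)
  obtain ⟨w, hw⟩ := cauchySeq_tendsto_of_complete hcauchy
  have hwmem : ∀ n, w ∈ ekelandSet f k (u n) := fun n =>
    (isClosed_ekelandSet hf).mem_of_tendsto hw
      ((eventually_ge_atTop n).mono fun _ hmn => hmem (hmn.trans (Nat.le_succ _)))
  refine ⟨w, hu₀ ▸ hwmem 0, fun v hv => ?_⟩
  have htendsto : Tendsto (fun n => u (n + 1)) atTop (𝓝 v) := by
    have hbound : Tendsto (fun n : ℕ => (1 : ℝ≥0∞) / 2 ^ n) atTop (𝓝 0) := by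
      simpa only [one_div, ENNReal.inv_pow] using
        ENNReal.tendsto_pow_atTop_nhds_zero_of_lt_one ENNReal.one_half_lt_one
    refine tendsto_iff_edist_tendsto_0.2 (tendsto_of_tendsto_of_tendsto_of_le_of_le
      tendsto_const_nhds hbound (fun _ => zero_le) fun n => ?_)
    rw [edist_comm]
    exact hsmall n v (ekelandSet_subset (hwmem _) hv)
  exact EMetric.inseparable_iff.1 (tendsto_nhds_unique_inseparable htendsto hw)

end Ekeland

section ErrorBound

variable {X : Type*} [MetricSpace X] {A : Set X} {φ : X → ℝ≥0∞} {k : ℝ≥0} {x : X}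

lemma frequently_add_mul_edist_le_of_rateOfDescent_lt
    (h : rateOfDescent (fun y => (φ y : EReal)) A x < ((-k : ℝ) : EReal)) :
    ∃ᶠ y in 𝓝[A \ {x}] x, φ y + k * edist y x ≤ φ x := by
  refine ((frequently_lt_of_liminf_lt (h := h)).and_eventually self_mem_nhdsWithin).mono ?_
  rintro y ⟨hy, -, hyx⟩
  have hdist : 0 < dist y x := dist_pos.2 hyx
  have hquot : ((φ y : EReal) - φ x) / (dist y x : ℝ) < ((-k : ℝ) : EReal) := hy
  obtain hx | hx := eq_or_ne (φ x) ⊤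
  · exact hx ▸ le_top
  rw [EReal.div_lt_iff (EReal.coe_pos.2 hdist) (EReal.coe_ne_top _),
    EReal.sub_lt_iff (by simp) (by simp [hx])] at hquot
  lift φ x to ℝ≥0 using hx with q
  have hlt : (φ y : EReal) < ((-k * dist y x + q : ℝ) : EReal) := hquot
  have hφy : φ y ≠ ⊤ := fun h => hlt.ne_top (by rw [h, EReal.coe_ennreal_top])
  lift φ y to ℝ≥0 using hφy with p
  have hlt_real : (p : ℝ) < -k * dist y x + q := EReal.coe_lt_coe_iff.1 hlt
  have hle : p + k * nndist y x ≤ q := by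
    rw [← NNReal.coe_le_coe]
    push_cast
    linarith
  rw [edist_nndist]
  exact_mod_cast hle

theorem exists_eq_zero_mul_edist_le_of_rateOfDescent_lt (hA : IsComplete A)
    (hφ : LowerSemicontinuousOn φ A) (hk : k ≠ 0) {y : X} (hy : y ∈ A) (hφy : φ y ≠ ⊤)
    (hrate : ∀ z ∈ A, k * edist z y ≤ φ y → φ z ≠ 0 →
      rateOfDescent (fun w => (φ w : EReal)) A z < ((-k : ℝ) : EReal)) :
    ∃ z ∈ A, φ z = 0 ∧ k * edist z y ≤ φ y := by
  have := hA.completeSpace_coe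
  obtain ⟨⟨z, hz⟩, hzy, hmin⟩ := exists_mem_ekelandSet_forall_edist_eq_zero (z := (⟨y, hy⟩ : A))
    (lowerSemicontinuous_restrict_iff.2 hφ) hk hφy
  have hle : k * edist z y ≤ φ y := le_add_self.trans hzy
  refine ⟨z, hz, by_contra fun hφz => ?_, hle⟩
  obtain ⟨w, hwle, hwA, hwz⟩ := ((frequently_add_mul_edist_le_of_rateOfDescent_lt
    (hrate z hz hle hφz)).and_eventually self_mem_nhdsWithin).exists
  exact hwz (edist_eq_zero.1 (hmin ⟨w, hwA⟩ hwle))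

theorem eventually_exists_eq_zero_mul_edist_le (hA : IsComplete A)
    (hφ : LowerSemicontinuousOn φ A) (hφx : φ x = 0) (hφc : ContinuousWithinAt φ A x)
    (hk : k ≠ 0) {U : Set X} (hU : U ∈ 𝓝[A] x)
    (hrate : ∀ z ∈ U ∩ A, φ z ≠ 0 →
      rateOfDescent (fun w => (φ w : EReal)) A z < ((-k : ℝ) : EReal)) :
    ∀ᶠ y in 𝓝[A] x, ∃ z ∈ U ∩ A, φ z = 0 ∧ k * edist z y ≤ φ y := by
  obtain ⟨ε, hε, hball⟩ := EMetric.mem_nhdsWithin_iff.1 hU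
  have hε2 : 0 < ε / 2 := ENNReal.half_pos hε.ne'
  have hφsmall : ∀ᶠ y in 𝓝[A] x, φ y < k * (ε / 2) := by
    refine hφc.eventually_lt_const ?_
    rw [hφx]
    exact ENNReal.mul_pos (ENNReal.coe_ne_zero.2 hk) hε2.ne'
  filter_upwards [self_mem_nhdsWithin, hφsmall,
    mem_nhdsWithin_of_mem_nhds (Metric.eball_mem_nhds x hε2)] with y hyA hφy hyx
  have hmemU : ∀ z ∈ A, k * edist z y ≤ φ y → z ∈ U := by
    intro z hzA hzy
    have hzy' : edist z y < ε / 2 := lt_of_mul_lt_mul_left' (hzy.trans_lt hφy)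
    refine hball ⟨?_, hzA⟩
    calc edist z x ≤ edist z y + edist y x := edist_triangle z y x
      _ < ε / 2 + ε / 2 := ENNReal.add_lt_add hzy' hyx
      _ = ε := ENNReal.add_halves ε
  obtain ⟨z, hzA, hφz, hzy⟩ := exists_eq_zero_mul_edist_le_of_rateOfDescent_lt hA hφ hk hyA
    hφy.ne_top fun z hzA hzy => hrate z ⟨hmemU z hzA hzy, hzA⟩
  exact ⟨z, ⟨hmemU z hzA hzy, hzA⟩, hφz, hzy⟩

end ErrorBound

section Penalty

variable {X : Type*} {I : X → EReal} {φ : X → ℝ≥0∞} {μ ν : ℝ≥0} {x : X}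

/-- The penalty function `Φ_μ = I + μ φ`. The weight is nonnegative, so that `μ φ` is formed in
`ℝ≥0∞` and only the sum in `EReal`; there `⊥ + ⊤ = ⊥`. -/
noncomputable def penaltyFunction (I : X → EReal) (φ : X → ℝ≥0∞) (μ : ℝ≥0) (x : X) : EReal :=
  I x + (μ * φ x : ℝ≥0∞)

lemma penaltyFunction_of_eq_zero (hx : φ x = 0) : penaltyFunction I φ μ x = I x := by
  simp [penaltyFunction, hx]

lemma penaltyFunction_mono (hμν : μ ≤ ν) : penaltyFunction I φ μ x ≤ penaltyFunction I φ ν x := by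
  unfold penaltyFunction
  gcongr
  exact EReal.coe_ennreal_le_coe_ennreal_iff.2 (by gcongr)

lemma penaltyFunction_add :
    penaltyFunction I φ (μ + ν) x = penaltyFunction I φ μ x + (ν * φ x : ℝ≥0∞) := by
  simp only [penaltyFunction, ENNReal.coe_add, add_mul, EReal.coe_ennreal_add, add_assoc]

lemma lt_of_penaltyFunction_add_lt {b c : ℝ} {δ : ℝ≥0} (hb : b ≤ penaltyFunction I φ μ x)
    (hν : c ≤ b + ν * δ) (hx : penaltyFunction I φ (μ + ν) x < c) : φ x < δ := by
  by_contra! hδ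
  refine hx.not_ge ?_
  calc (c : EReal) ≤ ((b + ν * δ : ℝ) : EReal) := EReal.coe_le_coe_iff.2 hν
    _ = b + (ν * δ : ℝ≥0∞) := rfl
    _ ≤ penaltyFunction I φ μ x + (ν * φ x : ℝ≥0∞) :=
        add_le_add hb (EReal.coe_ennreal_le_coe_ennreal_iff.2 (by gcongr))
    _ = penaltyFunction I φ (μ + ν) x := penaltyFunction_add.symm

lemma continuousWithinAt_penaltyFunction [TopologicalSpace X] {A : Set X} (hx : I x ≠ ⊥)
    (hI : ContinuousWithinAt I A x) (hφ : ContinuousWithinAt φ A x) :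
    ContinuousWithinAt (penaltyFunction I φ μ) A x := by
  have hμφ : ContinuousWithinAt (fun y => ((μ * φ y : ℝ≥0∞) : EReal)) A x :=
    continuous_coe_ennreal_ereal.continuousAt.comp_continuousWithinAt
      (ENNReal.Tendsto.const_mul hφ (.inr ENNReal.coe_ne_top))
  have hadd : ContinuousAt (fun p : EReal × EReal => p.1 + p.2) (I x, (μ * φ x : ℝ≥0∞)) :=
    EReal.continuousAt_add (.inr (EReal.coe_ennreal_ne_bot _)) (.inl hx)
  exact hadd.comp_continuousWithinAt (f := fun y => (I y, ((μ * φ y : ℝ≥0∞) : EReal)))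
    (hI.prodMk hμφ)

/-- The set `S_μ(c) ∩ Ω_δ`, that is, the part of `A` on which the hypotheses on `I` and on the
descent of `φ` are imposed. -/
def penaltySublevel (I : X → EReal) (φ : X → ℝ≥0∞) (A : Set X) (μ : ℝ≥0) (c : ℝ) (δ : ℝ≥0) :
    Set X :=
  {x | x ∈ A ∧ penaltyFunction I φ μ x < c ∧ φ x < δ}

lemma mem_penaltySublevel_of_add_le {A : Set X} {μ' : ℝ≥0} {b c : ℝ} {δ : ℝ≥0} (hxA : x ∈ A)
    (hb : b ≤ penaltyFunction I φ μ x) (hν : c ≤ b + ν * δ) (hμ' : μ + ν ≤ μ')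
    (hx : penaltyFunction I φ μ' x < c) : x ∈ penaltySublevel I φ A μ c δ :=
  have hadd : penaltyFunction I φ (μ + ν) x < c := (penaltyFunction_mono hμ').trans_lt hx
  ⟨hxA, (penaltyFunction_mono le_self_add).trans_lt hadd, lt_of_penaltyFunction_add_lt hb hν hadd⟩

lemma penaltySublevel_mem_nhdsWithin [TopologicalSpace X] {A : Set X} {c : ℝ} {δ : ℝ≥0}
    (hx : x ∈ penaltySublevel I φ A μ c δ) (hbot : I x ≠ ⊥) (hI : ContinuousWithinAt I A x)
    (hφ : ContinuousWithinAt φ A x) : penaltySublevel I φ A μ c δ ∈ 𝓝[A] x := by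
  filter_upwards [self_mem_nhdsWithin, hφ.eventually_lt_const hx.2.2,
    (continuousWithinAt_penaltyFunction hbot hI hφ).eventually_lt_const hx.2.1] with y hyA hφy hy
  exact ⟨hyA, hy, hφy⟩

lemma isLocalMinOn_of_isLocalMinOn_penaltyFunction [TopologicalSpace X] {A : Set X}
    (hx : φ x = 0) (hmin : IsLocalMinOn (penaltyFunction I φ μ) A x) :
    IsLocalMinOn I ({y | φ y = 0} ∩ A) x := by
  filter_upwards [hmin.on_subset inter_subset_right, self_mem_nhdsWithin] with y hxy hy
  rwa [penaltyFunction_of_eq_zero hx, penaltyFunction_of_eq_zero hy.1] at hxy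

end Penalty

section LipschitzToReal

variable {X : Type*} [PseudoMetricSpace X] {I : X → EReal} {V : Set X} {L : ℝ≥0}

lemma le_add_mul_edist_of_lipschitzOnWith_toReal (hbot : ∀ x ∈ V, I x ≠ ⊥)
    (htop : ∀ x ∈ V, I x ≠ ⊤) (hL : LipschitzOnWith L (fun x => (I x).toReal) V)
    {x y : X} (hx : x ∈ V) (hy : y ∈ V) : I x ≤ I y + (L * edist x y : ℝ≥0∞) := by
  rw [← EReal.coe_toReal (htop x hx) (hbot x hx), ← EReal.coe_toReal (htop y hy) (hbot y hy),
    edist_nndist]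
  exact EReal.coe_le_coe_iff.2 (hL.le_add_mul hx hy)

lemma continuousOn_of_lipschitzOnWith_toReal (hbot : ∀ x ∈ V, I x ≠ ⊥)
    (htop : ∀ x ∈ V, I x ≠ ⊤) (hL : LipschitzOnWith L (fun x => (I x).toReal) V) :
    ContinuousOn I V :=
  (continuous_coe_real_ereal.comp_continuousOn hL.continuousOn).congr fun x hx =>
    (EReal.coe_toReal (htop x hx) (hbot x hx)).symm

end LipschitzToReal

section ExactPenalty

variable {X : Type*} [MetricSpace X] {A V : Set X} {I : X → EReal} {φ : X → ℝ≥0∞}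
  {L k μ : ℝ≥0} {x : X}

theorem not_isLocalMinOn_penaltyFunction_of_rateOfDescent_lt (hbot : I x ≠ ⊥) (htop : I x ≠ ⊤)
    (hφx : φ x ≠ ⊤) (hI : ∀ᶠ y in 𝓝[A] x, I y ≤ I x + (L * edist y x : ℝ≥0∞))
    (hL : L < μ * k) (hrate : rateOfDescent (fun y => (φ y : EReal)) A x < ((-k : ℝ) : EReal)) :
    ¬ IsLocalMinOn (penaltyFunction I φ μ) A x := by
  intro hmin
  have hnear : ∀ᶠ y in 𝓝[A \ {x}] x,
      penaltyFunction I φ μ x ≤ penaltyFunction I φ μ y ∧ I y ≤ I x + (L * edist y x : ℝ≥0∞) :=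
    nhdsWithin_mono x sdiff_subset (Eventually.and hmin hI)
  obtain ⟨y, hφy, ⟨hxy, hIy⟩, -, hyx⟩ :=
    ((frequently_add_mul_edist_le_of_rateOfDescent_lt hrate).and_eventually
      (hnear.and self_mem_nhdsWithin)).exists
  have hdrop : L * edist y x + μ * φ y < μ * φ x :=
    calc L * edist y x + μ * φ y < μ * k * edist y x + μ * φ y := by
          refine ENNReal.add_lt_add_right ?_ ?_
          · exact ENNReal.mul_ne_top ENNReal.coe_ne_top
              (ne_top_of_le_ne_top hφx (le_self_add.trans hφy))
          · exact ENNReal.mul_lt_mul_left (edist_pos.2 hyx).ne' (edist_ne_top y x) (mod_cast hL)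
      _ = μ * (φ y + k * edist y x) := by ring
      _ ≤ μ * φ x := by gcongr
  refine hxy.not_gt ?_
  calc penaltyFunction I φ μ y
      ≤ I x + (L * edist y x : ℝ≥0∞) + (μ * φ y : ℝ≥0∞) := add_le_add_left hIy _
    _ = I x + (L * edist y x + μ * φ y : ℝ≥0∞) := by rw [EReal.coe_ennreal_add, add_assoc]
    _ < penaltyFunction I φ μ x := by
        unfold penaltyFunction
        lift I x to ℝ using ⟨htop, hbot⟩ with i
        exact EReal.add_lt_add_left_coe (EReal.coe_ennreal_lt_coe_ennreal_iff.2 hdrop) i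

theorem isLocalMinOn_penaltyFunction_of_isLocalMinOn (hA : IsComplete A)
    (hφ : LowerSemicontinuousOn φ A) (hφx : φ x = 0) (hφc : ContinuousWithinAt φ A x)
    (hV : V ∈ 𝓝[A] x) (hI : ∀ y ∈ V, ∀ z ∈ V, I z ≤ I y + (L * edist z y : ℝ≥0∞))
    (hk : k ≠ 0) (hL : L ≤ μ * k)
    (hrate : ∀ z ∈ V ∩ A, φ z ≠ 0 →
      rateOfDescent (fun y => (φ y : EReal)) A z < ((-k : ℝ) : EReal))
    (hmin : IsLocalMinOn I ({y | φ y = 0} ∩ A) x) :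
    IsLocalMinOn (penaltyFunction I φ μ) A x := by
  have hmin' : ∀ᶠ z in 𝓝[A] x, φ z = 0 → I x ≤ I z := by
    rw [IsLocalMinOn, IsMinFilter, inter_comm, nhdsWithin_inter'] at hmin
    exact eventually_inf_principal.1 hmin
  filter_upwards [hV, eventually_exists_eq_zero_mul_edist_le hA hφ hφx hφc hk
    (inter_mem hV hmin') fun z hz => hrate z ⟨hz.1.1, hz.2⟩] with y hyV ⟨z, hz, hφz, hzy⟩
  have hpen : L * edist z y ≤ μ * φ y :=
    calc L * edist z y ≤ μ * k * edist z y := by gcongr; exact_mod_cast hL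
      _ = μ * (k * edist z y) := mul_assoc _ _ _
      _ ≤ μ * φ y := by gcongr
  calc penaltyFunction I φ μ x = I x := penaltyFunction_of_eq_zero hφx
    _ ≤ I z := hz.1.2 hφz
    _ ≤ I y + (L * edist z y : ℝ≥0∞) := hI y hyV z hz.1.1
    _ ≤ penaltyFunction I φ μ y := add_le_add_right (EReal.coe_ennreal_le_coe_ennreal_iff.2 hpen) _

theorem isLocalMinOn_penaltyFunction_iff {μ₀ δ : ℝ≥0} {c : ℝ} (hA : IsComplete A)
    (hbot : ∀ y ∈ V, I y ≠ ⊥) (htop : ∀ y ∈ V, I y ≠ ⊤) (hV : IsOpen V)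
    (hSV : penaltySublevel I φ A μ₀ c δ ⊆ V)
    (hLip : LipschitzOnWith L (fun y => (I y).toReal) V)
    (hφ : LowerSemicontinuousOn φ A) (hφc : φ x = 0 → ContinuousWithinAt φ A x)
    (hrate : ∀ y ∈ penaltySublevel I φ A μ₀ c δ, φ y ≠ 0 →
      rateOfDescent (fun z => (φ z : EReal)) A y < ((-k : ℝ) : EReal))
    (hL : L < μ * k) (hx : x ∈ penaltySublevel I φ A μ₀ c δ) :
    IsLocalMinOn (penaltyFunction I φ μ) A x ↔
      x ∈ {y | φ y = 0} ∩ A ∧ IsLocalMinOn I ({y | φ y = 0} ∩ A) x := by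
  have hxV : x ∈ V := hSV hx
  have hVx : V ∈ 𝓝 x := hV.mem_nhds hxV
  have hI : ∀ y ∈ V, ∀ z ∈ V, I z ≤ I y + (L * edist z y : ℝ≥0∞) := fun y hy z hz =>
    le_add_mul_edist_of_lipschitzOnWith_toReal hbot htop hLip hz hy
  constructor
  · intro hmin
    have hφx : φ x = 0 := by
      by_contra hφx
      exact not_isLocalMinOn_penaltyFunction_of_rateOfDescent_lt (hbot x hxV) (htop x hxV)
        hx.2.2.ne_top (eventually_of_mem (mem_nhdsWithin_of_mem_nhds hVx) (hI x hxV)) hL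
        (hrate x hx hφx) hmin
    exact ⟨⟨hφx, hx.1⟩, isLocalMinOn_of_isLocalMinOn_penaltyFunction hφx hmin⟩
  · rintro ⟨⟨hφx, -⟩, hmin⟩
    have hIc : ContinuousWithinAt I A x :=
      ((continuousOn_of_lipschitzOnWith_toReal hbot htop hLip).continuousAt hVx).continuousWithinAt
    have hk : k ≠ 0 := fun hk => not_lt_zero (by simpa only [hk, mul_zero] using hL)
    exact isLocalMinOn_penaltyFunction_of_isLocalMinOn hA hφ hφx (hφc hφx)
      (penaltySublevel_mem_nhdsWithin hx (hbot x hxV) hIc (hφc hφx))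
      (fun y hy z hz => hI y (hSV hy) z (hSV hz)) hk hL.le (fun z hz => hrate z hz.1) hmin

end ExactPenalty

theorem exact_penalty_local_minimisers_general
    {X : Type*} [MetricSpace X] (M A : Set X) (hA : IsComplete A)
    (I : X → EReal) (hInotbot : ∀ x, I x ≠ ⊥)
    (φ : X → ℝ≥0∞) (hφM : ∀ x, φ x = 0 ↔ x ∈ M)
    (Φ : ℝ → X → EReal)
    (hΦdef : ∀ lam x, Φ lam x = I x + (lam : EReal) * ((φ x : ℝ≥0∞) : EReal))
    (hφlsc : LowerSemicontinuousOn φ A) (hφcont : ∀ x ∈ M ∩ A, ContinuousWithinAt φ A x)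
    (c lam₀ δ : ℝ) (hlam₀ : 0 ≤ lam₀) (hδ : 0 < δ)
    (hLip : ∃ (V : Set X) (L : ℝ≥0), IsOpen V ∧
      {x | x ∈ A ∧ Φ lam₀ x < ((c : ℝ) : EReal) ∧ φ x < ENNReal.ofReal δ} ⊆ V ∧
      (∀ x ∈ V, I x ≠ ⊤) ∧ LipschitzOnWith L (fun x => (I x).toReal) V)
    (hdesc : ∃ a : ℝ, 0 < a ∧
      ∀ x ∈ {x | x ∈ A ∧ Φ lam₀ x < ((c : ℝ) : EReal) ∧ φ x < ENNReal.ofReal δ} \ (M ∩ A),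
        rateOfDescent (fun y => ((φ y : ℝ≥0∞) : EReal)) A x ≤ ((-a : ℝ) : EReal))
    (hbdd : ∃ b : ℝ, ∀ x ∈ A, ((b : ℝ) : EReal) ≤ Φ lam₀ x) :
    ∃ lamStar : ℝ, 0 ≤ lamStar ∧ ∀ lam : ℝ, lamStar ≤ lam →
      ∀ x, x ∈ A → Φ lam x < ((c : ℝ) : EReal) →
        (IsLocalMinOn (Φ lam) A x ↔ (x ∈ M ∩ A ∧ IsLocalMinOn I (M ∩ A) x)) := by
  obtain rfl : {x | φ x = 0} = M := ext hφM
  obtain ⟨V, L, hV, hSV, htop, hL⟩ := hLip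
  obtain ⟨a, ha, hdesc⟩ := hdesc
  obtain ⟨b, hb⟩ := hbdd
  lift lam₀ to ℝ≥0 using hlam₀
  lift δ to ℝ≥0 using hδ.le
  lift a to ℝ≥0 using ha.le
  have hΦ : ∀ μ : ℝ≥0, Φ μ = penaltyFunction I φ μ := fun μ => funext fun x => by
    rw [hΦdef, penaltyFunction, EReal.coe_ennreal_mul]
    rfl
  simp only [hΦ, ENNReal.ofReal_coe_nnreal] at hSV hdesc hb
  obtain ⟨ν, hν⟩ : ∃ ν : ℝ≥0, c ≤ b + ν * δ :=
    ⟨((c - b) / δ).toNNReal, by linarith [(div_le_iff₀ hδ).1 (Real.le_coe_toNNReal ((c - b) / δ))]⟩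
  have hrate : ∀ x ∈ penaltySublevel I φ A lam₀ c δ, φ x ≠ 0 →
      rateOfDescent (fun y => (φ y : EReal)) A x < ((-(a / 2 : ℝ≥0) : ℝ) : EReal) :=
    fun x hx hφx => (hdesc x ⟨hx, fun h => hφx h.1⟩).trans_lt
      (EReal.coe_lt_coe_iff.2 (neg_lt_neg (half_lt_self ha)))
  refine ⟨(lam₀ + ν + (L / (a / 2) + 1) : ℝ≥0), NNReal.coe_nonneg _, fun lam hlam x hxA hxc => ?_⟩
  lift lam to ℝ≥0 using (NNReal.coe_nonneg _).trans hlam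
  rw [NNReal.coe_le_coe] at hlam
  rw [hΦ] at hxc ⊢
  have hL_lt : L < lam * (a / 2) := by
    rw [← div_lt_iff₀ (half_pos (NNReal.coe_pos.1 ha))]
    exact (lt_add_one _).trans_le (le_add_self.trans hlam)
  exact isLocalMinOn_penaltyFunction_iff hA (fun y _ => hInotbot y) htop hV hSV hL hφlsc
    (fun hφx => hφcont x ⟨hφx, hxA⟩) hrate hL_lt
    (mem_penaltySublevel_of_add_le hxA (hb x hxA) hν (le_self_add.trans hlam) hxc)

/-- Main theorem, part 3: for all sufficiently large `λ`, a point `x* ∈ S_λ(c)` is a locally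
optimal solution of the penalised problem iff it is a locally optimal solution of `(P)`. -/
theorem exact_penalty_local_minimisers
    {X : Type*} [MetricSpace X] [CompleteSpace X]
    (M A : Set X) (hA : IsClosed A)
    (I : X → EReal) (hInotbot : ∀ x, I x ≠ ⊥)
    (φ : X → ℝ≥0∞) (hφM : ∀ x, φ x = 0 ↔ x ∈ M)
    (Φ : ℝ → X → EReal)
    (hΦdef : ∀ lam x, Φ lam x = I x + (lam : EReal) * ((φ x : ℝ≥0∞) : EReal))
    (hIlsc : LowerSemicontinuousOn I A) (hφlsc : LowerSemicontinuousOn φ A)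
    (hφcont : ∀ x ∈ M ∩ A, ContinuousAt φ x)
    -- the problem (P) has a globally optimal solution with finite optimal value
    (xs : X) (hxs : xs ∈ M ∩ A) (hxsmin : ∀ y ∈ M ∩ A, I xs ≤ I y) (hxsfin : I xs ≠ ⊤)
    (c lam₀ δ : ℝ) (hc : I xs < ((c : ℝ) : EReal)) (hlam₀ : 0 < lam₀) (hδ : 0 < δ)
    -- (i) `I` is Lipschitz continuous on an open set containing `S_{λ₀}(c) ∩ Ω_δ`
    (hLip : ∃ (V : Set X) (L : ℝ≥0), IsOpen V ∧
      {x | x ∈ A ∧ Φ lam₀ x < ((c : ℝ) : EReal) ∧ φ x < ENNReal.ofReal δ} ⊆ V ∧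
      (∀ x ∈ V, I x ≠ ⊤) ∧ LipschitzOnWith L (fun x => (I x).toReal) V)
    -- (ii) the rate of steepest descent of `φ` w.r.t. `A` is ≤ −a < 0 on `S_{λ₀}(c) ∩ (Ω_δ \ Ω)`
    (hdesc : ∃ a : ℝ, 0 < a ∧
      ∀ x ∈ {x | x ∈ A ∧ Φ lam₀ x < ((c : ℝ) : EReal) ∧ φ x < ENNReal.ofReal δ} \ (M ∩ A),
        rateOfDescent (fun y => ((φ y : ℝ≥0∞) : EReal)) A x ≤ ((-a : ℝ) : EReal))
    -- (iii) `Φ_{λ₀}` is bounded below on `A`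
    (hbdd : ∃ b : ℝ, ∀ x ∈ A, ((b : ℝ) : EReal) ≤ Φ lam₀ x) :
    ∃ lamStar : ℝ, 0 ≤ lamStar ∧ ∀ lam : ℝ, lamStar ≤ lam →
      ∀ x, x ∈ A → Φ lam x < ((c : ℝ) : EReal) →
        (IsLocalMinOn (Φ lam) A x ↔ (x ∈ M ∩ A ∧ IsLocalMinOn I (M ∩ A) x)) :=
  exact_penalty_local_minimisers_general M A hA.isComplete I hInotbot φ hφM Φ hΦdef hφlsc
    (fun x hx => (hφcont x hx).continuousWithinAt) c lam₀ δ hlam₀.le hδ hLip hdesc hbdd
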